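/- arXiv:1807.05803 — 2 statements merged into one kernel-verified Lean document; each statement's English description precedes it below -/
import Mathlib

section
/- Let G be a directed multigraph, let A₁, A₂ be an arc split of G, and let s, t be distinct vertices. Then there exists an s-t min-cut of G that is split-covering with respect to A₁, A₂ and s, t. -/
/-!
Along any path the arcs of `A₁` precede those of `A₂`. Hence `M` is an `s`-`t` cut if and only if
its source side `S` in `(V, A₁)` and its target side `T` in `(V, A₂)` are disjoint, and then the
`A₁`-arcs leaving `S` and the `A₂`-arcs entering `T` are disjoint subsets of `M`.

Among all min-cuts choose `M` with `(S, T)` inclusion-minimal. Every vertex is outside `S` or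
outside `T`. If `v ∉ S`, the `A₁`-arcs leaving `S` form an `s`-`v` cut in `(V, A₁)` with the same
source side `S`. It is earliest: if `M'` were earlier and no larger, then exchanging these arcs for
`M'` would turn `M` into a min-cut whose source side is strictly smaller and whose target side is
no larger. Reversing all arcs gives the case `v ∉ T`.
-/

namespace APMC

/-- `Walk tl hd s t p` : the list of arcs `p` forms a path from `s` to `t` in the
directed multigraph with tail map `tl` and head map `hd`
(the empty path goes from a vertex to itself). -/
inductive Walk {V E : Type} (tl hd : E → V) : V → V → List E → Prop
  | nil (v : V) : Walk tl hd v v []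
  | cons (e : E) {v : V} {p : List E} :
      Walk tl hd (hd e) v p → Walk tl hd (tl e) v (e :: p)

variable {V E : Type}

/-- A walk from `s` to `t` using only arcs from `A`. -/
def WalkIn (tl hd : E → V) (A : Set E) (s t : V) (p : List E) : Prop :=
  Walk tl hd s t p ∧ ∀ e ∈ p, e ∈ A

/-- `t` is reachable from `s` in `(V, A)`. -/
def Reaches (tl hd : E → V) (A : Set E) (s t : V) : Prop :=
  ∃ p, WalkIn tl hd A s t p

/-- `M` is an `s`-`t` cut in `(V, A)`: every path from `s` to `t` within `A`
contains an arc of `M`. -/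
def IsCutIn (tl hd : E → V) (A : Set E) (s t : V) (M : Set E) : Prop :=
  ∀ p, WalkIn tl hd A s t p → ∃ e ∈ p, e ∈ M

/-- The target side `T_M` of a cut `M`: vertices admitting a path to `t` avoiding `M`. -/
def targetSide (tl hd : E → V) (A : Set E) (t : V) (M : Set E) : Set V :=
  {x | ∃ p, WalkIn tl hd A x t p ∧ ∀ e ∈ p, e ∉ M}

/-- The source side `S_M` of a cut `M`: vertices admitting a path from `s` avoiding `M`. -/
def sourceSide (tl hd : E → V) (A : Set E) (s : V) (M : Set E) : Set V :=
  {x | ∃ p, WalkIn tl hd A s x p ∧ ∀ e ∈ p, e ∉ M}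

/-- `M` is an `s`-`t` min-cut in `(V, A)`: a cut of minimum cardinality. -/
def IsMinCutIn (tl hd : E → V) (A : Set E) (s t : V) (M : Set E) : Prop :=
  IsCutIn tl hd A s t M ∧ ∀ M' : Set E, IsCutIn tl hd A s t M' → M.ncard ≤ M'.ncard

/-- `M` is a minimal `s`-`t` cut in `(V, A)`: no proper subset of `M` is a cut. -/
def IsMinimalCutIn (tl hd : E → V) (A : Set E) (s t : V) (M : Set E) : Prop :=
  IsCutIn tl hd A s t M ∧ ∀ M' : Set E, M' ⊂ M → ¬ IsCutIn tl hd A s t M'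

/-- `StrictLater ... M M'` means `M > M'`, i.e. `T_M ⊆ T_{M'}` and `T_M ≠ T_{M'}`. -/
def StrictLater (tl hd : E → V) (A : Set E) (t : V) (M M' : Set E) : Prop :=
  targetSide tl hd A t M ⊆ targetSide tl hd A t M' ∧
    targetSide tl hd A t M ≠ targetSide tl hd A t M'

/-- `StrictEarlier ... M M'` means `M < M'`, i.e. `S_M ⊆ S_{M'}` and `S_M ≠ S_{M'}`. -/
def StrictEarlier (tl hd : E → V) (A : Set E) (s : V) (M M' : Set E) : Prop :=
  sourceSide tl hd A s M ⊆ sourceSide tl hd A s M' ∧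
    sourceSide tl hd A s M ≠ sourceSide tl hd A s M'

/-- `M` is an `s`-`t`-latest cut in `(V, A)`:
no `s`-`t` cut `M'` satisfies `M' > M` and `|M'| ≤ |M|`. -/
def IsLatestIn (tl hd : E → V) (A : Set E) (s t : V) (M : Set E) : Prop :=
  IsCutIn tl hd A s t M ∧
    ¬ ∃ M' : Set E, IsCutIn tl hd A s t M' ∧ StrictLater tl hd A t M' M ∧
      M'.ncard ≤ M.ncard

/-- `M` is an `s`-`t`-earliest cut in `(V, A)`:
no `s`-`t` cut `M'` satisfies `M' < M` and `|M'| ≤ |M|`. -/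
def IsEarliestIn (tl hd : E → V) (A : Set E) (s t : V) (M : Set E) : Prop :=
  IsCutIn tl hd A s t M ∧
    ¬ ∃ M' : Set E, IsCutIn tl hd A s t M' ∧ StrictEarlier tl hd A s M' M ∧
      M'.ncard ≤ M.ncard

/-- `A₁, A₂` is an arc split of the arc set: a partition of the arcs such that
no arc of `A₁` starts where an arc of `A₂` ends. -/
def ArcSplit (tl hd : E → V) (A₁ A₂ : Set E) : Prop :=
  A₁ ∪ A₂ = Set.univ ∧ A₁ ∩ A₂ = ∅ ∧
    ∀ e₁ ∈ A₂, ∀ e₂ ∈ A₁, hd e₁ ≠ tl e₂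

/-- `M` is split-covering with respect to the arc split `A₁, A₂` and vertices `s`, `t`. -/
def SplitCovering (tl hd : E → V) (A₁ A₂ : Set E) (s t : V) (M : Set E) : Prop :=
  ∀ v : V, ∃ Mv ⊆ M,
    ((s ≠ v ∧ v ≠ t ∧ (¬ Reaches tl hd A₁ s v ∨ ¬ Reaches tl hd A₂ v t)) ∨
     IsEarliestIn tl hd A₁ s v Mv ∨
     IsLatestIn tl hd A₂ v t Mv)

/-- `M` is late-covering with respect to the `s`-`t` cut `C`. -/
def LateCovering (tl hd : E → V) (t : V) (C M : Set E) : Prop :=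
  ∀ e ∈ C, e ∈ M ∨ ∃ M' ⊆ M, IsLatestIn tl hd Set.univ (hd e) t M'

end APMC

open APMC

namespace APMC

variable {V E : Type} {tl hd : E → V} {A A₁ A₂ M N : Set E} {s t v x y z : V} {p q : List E}

section Reversal

lemma Walk.append (hp : Walk tl hd x y p) (hq : Walk tl hd y z q) : Walk tl hd x z (p ++ q) := by
  induction hp with
  | nil => exact hq
  | cons e _ ih => exact .cons e (ih hq)

lemma Walk.reverse (hp : Walk tl hd x y p) : Walk hd tl y x p.reverse := by
  induction hp with
  | nil v => exact .nil v
  | cons e _ ih => simpa using ih.append (.cons e (.nil _))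

lemma WalkIn.reverse (hp : WalkIn tl hd A x y p) : WalkIn hd tl A y x p.reverse :=
  ⟨hp.1.reverse, by simpa using hp.2⟩

lemma sourceSide_swap (A M : Set E) (t : V) :
    sourceSide hd tl A t M = targetSide tl hd A t M := by
  ext x
  constructor <;>
  · rintro ⟨p, hp, hM⟩
    exact ⟨p.reverse, hp.reverse, by simpa using hM⟩

lemma targetSide_swap (A M : Set E) (s : V) :
    targetSide hd tl A s M = sourceSide tl hd A s M :=
  (sourceSide_swap A M s).symm

lemma IsCutIn.swap (h : IsCutIn tl hd A s t M) : IsCutIn hd tl A t s M :=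
  fun p hp ↦ by simpa using h p.reverse hp.reverse

lemma isCutIn_swap : IsCutIn hd tl A t s M ↔ IsCutIn tl hd A s t M :=
  ⟨.swap, .swap⟩

lemma isMinCutIn_swap : IsMinCutIn hd tl A t s M ↔ IsMinCutIn tl hd A s t M := by
  simp only [IsMinCutIn, isCutIn_swap]

lemma isEarliestIn_swap : IsEarliestIn hd tl A t s M ↔ IsLatestIn tl hd A s t M := by
  simp only [IsEarliestIn, IsLatestIn, StrictEarlier, StrictLater, isCutIn_swap, sourceSide_swap]

lemma ArcSplit.swap (h : ArcSplit tl hd A₁ A₂) : ArcSplit hd tl A₂ A₁ :=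
  ⟨Set.union_comm A₂ A₁ ▸ h.1, Set.inter_comm A₂ A₁ ▸ h.2.1,
    fun e₁ he₁ e₂ he₂ ↦ (h.2.2 e₂ he₂ e₁ he₁).symm⟩

end Reversal

section Sides

lemma isCutIn_iff_notMem_sourceSide : IsCutIn tl hd A s v M ↔ v ∉ sourceSide tl hd A s M := by
  simp [IsCutIn, sourceSide]

lemma sourceSide_anti (h : M ⊆ N) : sourceSide tl hd A s N ⊆ sourceSide tl hd A s M :=
  fun _ ⟨p, hp, hN⟩ ↦ ⟨p, hp, fun e he heM ↦ hN e he (h heM)⟩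

lemma targetSide_anti (h : M ⊆ N) : targetSide tl hd A t N ⊆ targetSide tl hd A t M :=
  fun _ ⟨p, hp, hN⟩ ↦ ⟨p, hp, fun e he heM ↦ hN e he (h heM)⟩

/-- The arcs of `A` leaving the vertex set `X`, used to extract a cut from the source side of a
larger one. The arcs entering `X` are written `outArcs hd tl A X`, with tails and heads
exchanged. -/
def outArcs (tl hd : E → V) (A : Set E) (X : Set V) : Set E :=
  {e ∈ A | tl e ∈ X ∧ hd e ∉ X}

lemma outArcs_subset (A : Set E) (X : Set V) : outArcs tl hd A X ⊆ A :=
  Set.sep_subset _ _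

lemma WalkIn.mem_of_forall_notMem_outArcs {X : Set V} (hp : WalkIn tl hd A x y p) (hx : x ∈ X)
    (hX : ∀ e ∈ p, e ∉ outArcs tl hd A X) : y ∈ X := by
  obtain ⟨hp, hA⟩ := hp
  induction hp with
  | nil => exact hx
  | cons e _ ih =>
    simp only [List.forall_mem_cons] at hA hX
    exact ih (by_contra fun he ↦ hX.1 ⟨hA.1, hx, he⟩) hX.2 hA.2

lemma self_mem_sourceSide (A M : Set E) (s : V) : s ∈ sourceSide tl hd A s M :=
  ⟨[], ⟨.nil s, by simp⟩, by simp⟩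

lemma outArcs_sourceSide_subset (A M : Set E) (s : V) :
    outArcs tl hd A (sourceSide tl hd A s M) ⊆ M := by
  rintro e ⟨heA, ⟨p, ⟨hp, hA⟩, hM⟩, he⟩
  by_contra heM
  refine he ⟨p ++ [e], ⟨hp.append (.cons e (.nil _)), ?_⟩, ?_⟩
  · simpa [or_imp, forall_and] using ⟨hA, heA⟩
  · simpa [or_imp, forall_and] using ⟨hM, heM⟩

lemma outArcs_targetSide_subset (A M : Set E) (t : V) :
    outArcs hd tl A (targetSide tl hd A t M) ⊆ M := by
  simpa only [sourceSide_swap] using outArcs_sourceSide_subset (tl := hd) (hd := tl) A M t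

lemma sourceSide_outArcs_sourceSide (A M : Set E) (s : V) :
    sourceSide tl hd A s (outArcs tl hd A (sourceSide tl hd A s M)) = sourceSide tl hd A s M :=
  Set.Subset.antisymm
    (fun _ ⟨_, hp, hX⟩ ↦ hp.mem_of_forall_notMem_outArcs (self_mem_sourceSide A M s) hX)
    (sourceSide_anti (outArcs_sourceSide_subset A M s))

lemma targetSide_outArcs_targetSide (A M : Set E) (t : V) :
    targetSide tl hd A t (outArcs hd tl A (targetSide tl hd A t M)) = targetSide tl hd A t M := by
  simpa only [sourceSide_swap] using sourceSide_outArcs_sourceSide (tl := hd) (hd := tl) A M t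

lemma targetSide_union_outArcs_subset (A M N : Set E) (t : V) :
    targetSide tl hd A t (N ∪ outArcs hd tl A (targetSide tl hd A t M)) ⊆ targetSide tl hd A t M :=
  (targetSide_anti Set.subset_union_right).trans (targetSide_outArcs_targetSide A M t).subset

end Sides

section ArcSplit

lemma ArcSplit.exists_append (h : ArcSplit tl hd A₁ A₂) (hp : Walk tl hd x y p) :
    ∃ z p₁ p₂, p = p₁ ++ p₂ ∧ WalkIn tl hd A₁ x z p₁ ∧ WalkIn tl hd A₂ z y p₂ := by
  induction hp with
  | nil v => exact ⟨v, [], [], rfl, ⟨.nil v, by simp⟩, ⟨.nil v, by simp⟩⟩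
  | cons e _ ih =>
    obtain ⟨z, p₁, p₂, rfl, ⟨hp₁, hA₁⟩, ⟨hp₂, hA₂⟩⟩ := ih
    have he : e ∈ A₁ ∪ A₂ := h.1 ▸ Set.mem_univ e
    rcases he with he | he
    · exact ⟨z, e :: p₁, p₂, rfl, ⟨.cons e hp₁, by simpa [he] using hA₁⟩, hp₂, hA₂⟩
    · -- No arc of `A₁` can follow `e`, so the first part of the remaining walk is empty.
      generalize hy : hd e = y at hp₁
      cases hp₁ with
      | nil =>
        subst hy
        exact ⟨tl e, [], e :: p₂, rfl, ⟨.nil _, by simp⟩, .cons e hp₂, by simpa [he] using hA₂⟩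
      | cons e' _ => exact absurd hy (h.2.2 e he e' (hA₁ e' (by simp)))

lemma ArcSplit.isCutIn_univ_iff_disjoint (h : ArcSplit tl hd A₁ A₂) :
    IsCutIn tl hd Set.univ s t M ↔
      Disjoint (sourceSide tl hd A₁ s M) (targetSide tl hd A₂ t M) := by
  rw [Set.disjoint_left]
  constructor
  · rintro hM v ⟨p, hp, hpM⟩ ⟨q, hq, hqM⟩
    obtain ⟨e, he, heM⟩ := hM (p ++ q) ⟨hp.1.append hq.1, fun _ _ ↦ Set.mem_univ _⟩
    exact (List.mem_append.1 he).elim (hpM e · heM) (hqM e · heM)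
  · rintro hM p ⟨hp, -⟩
    obtain ⟨v, p₁, p₂, rfl, hp₁, hp₂⟩ := h.exists_append hp
    by_contra! hpM
    exact hM ⟨p₁, hp₁, fun e he ↦ hpM e (List.mem_append_left _ he)⟩
      ⟨p₂, hp₂, fun e he ↦ hpM e (List.mem_append_right _ he)⟩

lemma ArcSplit.isCutIn_union_outArcs_targetSide (h : ArcSplit tl hd A₁ A₂)
    (hM : IsCutIn tl hd Set.univ s t M)
    (hN : sourceSide tl hd A₁ s N ⊆ sourceSide tl hd A₁ s M) :
    IsCutIn tl hd Set.univ s t (N ∪ outArcs hd tl A₂ (targetSide tl hd A₂ t M)) := by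
  rw [h.isCutIn_univ_iff_disjoint] at hM ⊢
  exact hM.mono ((sourceSide_anti Set.subset_union_left).trans hN)
    (targetSide_union_outArcs_subset A₂ M N t)

lemma ncard_outArcs_add_ncard_outArcs_le [Finite E] (h : Disjoint A₁ A₂) (M : Set E) (s t : V) :
    (outArcs tl hd A₁ (sourceSide tl hd A₁ s M)).ncard +
      (outArcs hd tl A₂ (targetSide tl hd A₂ t M)).ncard ≤ M.ncard := by
  rw [← Set.ncard_union_eq (h.mono (outArcs_subset _ _) (outArcs_subset _ _))]
  exact Set.ncard_le_ncard
    (Set.union_subset (outArcs_sourceSide_subset A₁ M s) (outArcs_targetSide_subset A₂ M t))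

end ArcSplit

section MinCut

lemma isCutIn_univ (hst : s ≠ t) : IsCutIn tl hd A s t Set.univ := by
  rintro p ⟨hp, -⟩
  cases hp with
  | nil => exact absurd rfl hst
  | cons e _ => exact ⟨e, by simp, Set.mem_univ e⟩

lemma exists_isMinCutIn [Finite E] (hst : s ≠ t) : ∃ M, IsMinCutIn tl hd A s t M :=
  Set.exists_min_image {M | IsCutIn tl hd A s t M} Set.ncard (Set.toFinite _)
    ⟨Set.univ, isCutIn_univ hst⟩

/-- A min-cut whose pair of source side in `(V, A₁)` and target side in `(V, A₂)` is
inclusion-minimal among all min-cuts. Such a cut will be split-covering. -/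
def IsInnermostMinCut (tl hd : E → V) (A₁ A₂ : Set E) (s t : V) (M : Set E) : Prop :=
  MinimalFor (IsMinCutIn tl hd Set.univ s t)
    (fun N ↦ (sourceSide tl hd A₁ s N, targetSide tl hd A₂ t N)) M

lemma exists_isInnermostMinCut [Finite E] (hst : s ≠ t) :
    ∃ M, IsInnermostMinCut tl hd A₁ A₂ s t M :=
  (Set.toFinite {M | IsMinCutIn tl hd Set.univ s t M}).exists_minimalFor _ _
    (exists_isMinCutIn hst)

lemma IsInnermostMinCut.swap (hM : IsInnermostMinCut tl hd A₁ A₂ s t M) :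
    IsInnermostMinCut hd tl A₂ A₁ t s M := by
  have hsides (N : Set E) : (sourceSide hd tl A₂ t N, targetSide hd tl A₁ s N) =
      (sourceSide tl hd A₁ s N, targetSide tl hd A₂ t N).swap := by
    rw [sourceSide_swap A₂ N t, targetSide_swap A₁ N s, Prod.swap_prod_mk]
  refine ⟨isMinCutIn_swap.2 hM.1, fun N hN hNM ↦ ?_⟩
  simp only [hsides, Prod.swap_le_swap] at hNM ⊢
  exact hM.2 (isMinCutIn_swap.1 hN) hNM

lemma IsInnermostMinCut.isEarliestIn [Finite E] (h : ArcSplit tl hd A₁ A₂)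
    (hM : IsInnermostMinCut tl hd A₁ A₂ s t M) (hv : v ∉ sourceSide tl hd A₁ s M) :
    IsEarliestIn tl hd A₁ s v (outArcs tl hd A₁ (sourceSide tl hd A₁ s M)) := by
  have hside := sourceSide_outArcs_sourceSide (tl := tl) (hd := hd) A₁ M s
  refine ⟨isCutIn_iff_notMem_sourceSide.2 (by rwa [hside]), ?_⟩
  rintro ⟨M', -, ⟨hsub, hne⟩, hcard⟩
  rw [hside] at hsub hne
  set B := outArcs hd tl A₂ (targetSide tl hd A₂ t M)
  have hcut : IsCutIn tl hd Set.univ s t (M' ∪ B) :=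
    h.isCutIn_union_outArcs_targetSide hM.1.1 hsub
  have hle : (M' ∪ B).ncard ≤ M.ncard := by
    have hdisj := Set.disjoint_iff_inter_eq_empty.2 h.2.1
    grw [Set.ncard_union_le, hcard]
    exact ncard_outArcs_add_ncard_outArcs_le hdisj M s t
  have hmin : IsMinCutIn tl hd Set.univ s t (M' ∪ B) :=
    ⟨hcut, fun N hN ↦ hle.trans (hM.1.2 N hN)⟩
  have hS : sourceSide tl hd A₁ s (M' ∪ B) ⊆ sourceSide tl hd A₁ s M' :=
    sourceSide_anti Set.subset_union_left
  have hT : targetSide tl hd A₂ t (M' ∪ B) ⊆ targetSide tl hd A₂ t M :=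
    targetSide_union_outArcs_subset A₂ M M' t
  exact hne (hsub.antisymm ((hM.2 hmin ⟨hS.trans hsub, hT⟩).1.trans hS))

lemma IsInnermostMinCut.isLatestIn [Finite E] (h : ArcSplit tl hd A₁ A₂)
    (hM : IsInnermostMinCut tl hd A₁ A₂ s t M) (hv : v ∉ targetSide tl hd A₂ t M) :
    IsLatestIn tl hd A₂ v t (outArcs hd tl A₂ (targetSide tl hd A₂ t M)) := by
  rw [← isEarliestIn_swap, ← sourceSide_swap]
  exact hM.swap.isEarliestIn h.swap (by rwa [sourceSide_swap])

end MinCut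

end APMC

theorem exists_splitCovering_min_cut_general {V E : Type} [Finite E] (tl hd : E → V)
    (A₁ A₂ : Set E) (hsplit : ArcSplit tl hd A₁ A₂) (s t : V) (hst : s ≠ t) :
    ∃ M : Set E, IsMinCutIn tl hd Set.univ s t M ∧
      ∀ v, ∃ Mv ⊆ M, IsEarliestIn tl hd A₁ s v Mv ∨ IsLatestIn tl hd A₂ v t Mv := by
  obtain ⟨M, hM⟩ := exists_isInnermostMinCut (tl := tl) (hd := hd) (A₁ := A₁) (A₂ := A₂) hst
  have hdisj := hsplit.isCutIn_univ_iff_disjoint.1 hM.1.1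
  refine ⟨M, hM.1, fun v ↦ ?_⟩
  by_cases hv : v ∈ sourceSide tl hd A₁ s M
  · exact ⟨_, outArcs_targetSide_subset A₂ M t,
      .inr (hM.isLatestIn hsplit (Set.disjoint_left.1 hdisj hv))⟩
  · exact ⟨_, outArcs_sourceSide_subset A₁ M s, .inl (hM.isEarliestIn hsplit hv)⟩

/-- There exists an `s`-`t` min-cut that is split-covering with respect to the
arc split `A₁, A₂` and vertices `s`, `t`. -/
theorem exists_splitCovering_min_cut {V E : Type} [Fintype V] [Fintype E]
    (tl hd : E → V) (A₁ A₂ : Set E) (hsplit : ArcSplit tl hd A₁ A₂)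
    (s t : V) (hst : s ≠ t) :
    ∃ M : Set E, IsMinCutIn tl hd Set.univ s t M ∧
      SplitCovering tl hd A₁ A₂ s t M := by
  obtain ⟨M, hM, hcover⟩ := exists_splitCovering_min_cut_general tl hd A₁ A₂ hsplit s t hst
  exact ⟨M, hM, fun v ↦ (hcover v).imp fun _ ↦ And.imp_right .inr⟩
end

section
/- Let G be a directed multigraph with distinct vertices s, t, and let C₀ = {e ∈ E : tail(e) = s and there is a path from head(e) to t in G}. Then C₀ is an s-t cut and every s-t-latest cut M satisfies M ≥ C₀ (i.e., T_M ⊆ T_{C₀}). -/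
open APMC

namespace APMC

variable {V E : Type} {tl hd : E → V} {A C M : Set E} {s t x : V} {p : List E} {e : E}

theorem Walk.exists_cons_isSuffix_of_mem (hp : Walk tl hd x t p) (he : e ∈ p) :
    ∃ q, e :: q <:+ p ∧ Walk tl hd (tl e) t (e :: q) := by
  induction hp with
  | nil => cases he
  | cons a hp ih =>
    rcases List.mem_cons.mp he with rfl | he
    · exact ⟨_, List.suffix_rfl, .cons e hp⟩
    · obtain ⟨q, hqp, hq⟩ := ih he
      exact ⟨q, hqp.trans (List.suffix_cons a _), hq⟩

theorem isCutIn_iff_notMem_targetSide :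
    IsCutIn tl hd A s t M ↔ s ∉ targetSide tl hd A t M := by
  simp only [IsCutIn, targetSide, Set.mem_ofPred_eq, not_exists, not_and, not_forall, not_not,
    exists_prop]

theorem WalkIn.tail_mem_targetSide (hp : WalkIn tl hd A x t p) (hpM : ∀ f ∈ p, f ∉ M)
    (he : e ∈ p) : tl e ∈ targetSide tl hd A t M := by
  obtain ⟨q, hqp, hq⟩ := hp.1.exists_cons_isSuffix_of_mem he
  exact ⟨e :: q, ⟨hq, fun f hf => hp.2 f (hqp.subset hf)⟩, fun f hf => hpM f (hqp.subset hf)⟩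

theorem IsCutIn.targetSide_subset_of_tail_eq (hM : IsCutIn tl hd A s t M)
    (hC : ∀ e ∈ C, tl e = s) : targetSide tl hd A t M ⊆ targetSide tl hd A t C := by
  rintro x ⟨p, hp, hpM⟩
  refine ⟨p, hp, fun e he heC => isCutIn_iff_notMem_targetSide.mp hM ?_⟩
  exact hC e heC ▸ hp.tail_mem_targetSide hpM he

/-- The cut `C₀` of arcs leaving `s` whose head reaches `t`, relative to the arc set `A`. The arcs
themselves are not required to lie in `A`, since cuts in `(V, A)` may contain arcs outside `A`. -/
def canonicalCut (tl hd : E → V) (A : Set E) (s t : V) : Set E :=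
  {e | tl e = s ∧ Reaches tl hd A (hd e) t}

theorem isCutIn_canonicalCut (hst : s ≠ t) :
    IsCutIn tl hd A s t (canonicalCut tl hd A s t) := by
  rintro _ ⟨_ | ⟨e, hp⟩, hpA⟩
  · exact absurd rfl hst
  · exact ⟨e, List.mem_cons_self, rfl, _, hp, (List.forall_mem_cons.mp hpA).2⟩

end APMC

theorem canonical_earliest_cut_general {V E : Type} (tl hd : E → V) (A : Set E) {s t : V}
    (hst : s ≠ t) :
    IsCutIn tl hd A s t (canonicalCut tl hd A s t) ∧
      ∀ M : Set E, IsCutIn tl hd A s t M →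
        targetSide tl hd A t M ⊆ targetSide tl hd A t (canonicalCut tl hd A s t) :=
  ⟨isCutIn_canonicalCut hst, fun _ hM => hM.targetSide_subset_of_tail_eq fun _ he => he.1⟩

/-- The set `C₀` of all arcs leaving `s` whose head reaches `t` is an `s`-`t` cut
and every `s`-`t`-latest cut `M` satisfies `M ≥ C₀`, i.e. `T_M ⊆ T_{C₀}`. -/
theorem canonical_earliest_cut {V E : Type} [Fintype V] [Fintype E]
    (tl hd : E → V) (s t : V) (hst : s ≠ t) :
    IsCutIn tl hd Set.univ s t
        {e : E | tl e = s ∧ Reaches tl hd Set.univ (hd e) t} ∧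
      ∀ M : Set E, IsLatestIn tl hd Set.univ s t M →
        targetSide tl hd Set.univ t M ⊆
          targetSide tl hd Set.univ t
            {e : E | tl e = s ∧ Reaches tl hd Set.univ (hd e) t} := by
  have h := canonical_earliest_cut_general tl hd Set.univ hst
  exact ⟨h.1, fun M hM => h.2 M hM.1⟩
end
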